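/- Let f1 be the function on lines of AG(2,3) with values in GF(2) that takes the value 1 on the line {(0,0),(0,1),(0,2)} and the value 0 on every other line. Then the incidence structure S(f1) is a Steiner triple system of order 19, and its unique Veblen point is the point (*,1). -/

import Mathlib

/-!
Everything holds for an arbitrary function `f` on the lines of `AG(2,3)`, so `f` is kept general.

Two distinct points lie in one triple: over distinct `P`, `Q` the third point must lie over the
third point `-P-Q` of the line `PQ`, at the height forced by `f` (`STrip19.eq_of_mem`); over the
same `P` it is `(*,1)` (`STrip19.eq_of_mem_fibre`).

The involution fixing `(*,1)` and exchanging `(P,0)` with `(P,1)` is what makes `(*,1)` a Veblen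
point: replacing `a`, `c` by `b`, `d` raises two of the three heights by `1`, which does not
change their sum in `GF(2)`.

No point `(P,x)` is Veblen, because `AG(2,3)`, onto which `S(f)` projects, has no Veblen points:
with `A = P + e₁`, `C = P + e₂`, the axiom at `P` would put `P - e₁ - e₂`, `P - e₁`, `P - e₂` on
a line, but these three points do not sum to zero.
-/


universe u v

/-- `T` is the triple set of a Steiner triple system on the point set `α`:
every member of `T` has three elements, and every pair of distinct points
lies in exactly one member of `T`. -/
def IsSTS {α : Type u} (T : Set (Finset α)) : Prop :=
  (∀ t ∈ T, t.card = 3) ∧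
  ∀ a b : α, a ≠ b → ∃! t : Finset α, t ∈ T ∧ a ∈ t ∧ b ∈ t

/-- `x` is a Veblen point of the Steiner triple system with triple set `T`:
whenever `{x,a,b}`, `{x,c,d}` and `{t,a,c}` are triples, so is `{t,b,d}`. -/
def IsVeblen {α : Type u} [DecidableEq α] (T : Set (Finset α)) (x : α) : Prop :=
  ∀ a b c d t : α, ({x, a, b} : Finset α) ∈ T → ({x, c, d} : Finset α) ∈ T →
    ({t, a, c} : Finset α) ∈ T → ({t, b, d} : Finset α) ∈ T

/-- Isomorphism of Steiner triple systems: a bijection of the point sets carrying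
the triples of one system exactly onto the triples of the other. -/
def STSIso {α : Type u} {β : Type v} [DecidableEq β]
    (T₁ : Set (Finset α)) (T₂ : Set (Finset β)) : Prop :=
  ∃ e : α ≃ β, ∀ t : Finset α, t ∈ T₁ ↔ t.image (e : α → β) ∈ T₂

/-- The points of the quotient system at a point `x`: the triples through `x`. -/
abbrev QuotPts {α : Type u} (T : Set (Finset α)) (x : α) : Type u :=
  {t : Finset α // t ∈ T ∧ x ∈ t}

/-- The triples of the quotient system at a Veblen point `x`: three distinct
triples `T1`, `T2`, `T3` through `x` form a triple iff there are `a ∈ T1 \ {x}`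
and `c ∈ T2 \ {x}` such that the third point of the triple through `a` and `c`
lies in `T3`. -/
def QuotTriples {α : Type u} [DecidableEq α] (T : Set (Finset α)) (x : α) :
    Set (Finset (QuotPts T x)) :=
  {b | ∃ T1 T2 T3 : QuotPts T x, T1 ≠ T2 ∧ T1 ≠ T3 ∧ T2 ≠ T3 ∧ b = {T1, T2, T3} ∧
      ∃ a ∈ T1.1, a ≠ x ∧ ∃ c ∈ T2.1, c ≠ x ∧
        ∃ d, ({a, c, d} : Finset α) ∈ T ∧ d ∈ T3.1}

/-- The nonzero vectors of `GF(2)^n`, i.e. the points of `PG(n-1,2)`. -/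
abbrev PGPt (n : ℕ) : Type := {u : Fin n → ZMod 2 // u ≠ 0}

/-- The lines of `PG(n-1,2)`: sets `{u,v,w}` of distinct nonzero vectors of
`GF(2)^n` with `u + v + w = 0`. -/
def PGTriples (n : ℕ) : Set (Finset (PGPt n)) :=
  {t | ∃ u v w : PGPt n, u ≠ v ∧ u ≠ w ∧ v ≠ w ∧ t = {u, v, w} ∧
      u.1 + v.1 + w.1 = 0}

/-- The system contains a Pasch configuration: six distinct points
`x, a, b, c, d, t` with `{x,a,b}`, `{x,c,d}`, `{t,a,c}`, `{t,b,d}` all triples. -/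
def HasPasch {α : Type u} [DecidableEq α] (T : Set (Finset α)) : Prop :=
  ∃ x a b c d t : α, ({x, a, b, c, d, t} : Finset α).card = 6 ∧
    ({x, a, b} : Finset α) ∈ T ∧ ({x, c, d} : Finset α) ∈ T ∧
    ({t, a, c} : Finset α) ∈ T ∧ ({t, b, d} : Finset α) ∈ T

/-- The points of the affine plane `AG(2,3)`. -/
abbrev AGPt : Type := ZMod 3 × ZMod 3

/-- `L` is a line of `AG(2,3)`: a 3-element subset `{P,Q,R}` of `GF(3)^2`
with `P + Q + R = 0`. -/
def AGLine (L : Finset AGPt) : Prop :=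
  ∃ P Q R : AGPt, P ≠ Q ∧ P ≠ R ∧ Q ≠ R ∧ L = {P, Q, R} ∧ P + Q + R = 0

/-- The point set of the extension construction: the extra point `(*,1)`
(encoded as `none`) together with `GF(3)^2 × GF(2)`. -/
abbrev SPt19 : Type := Option (AGPt × ZMod 2)

/-- The triples of the incidence structure `S(f)` associated with a function `f`
on the lines of `AG(2,3)` with values in `GF(2)`:
(a) `{(*,1), (P,0), (P,1)}` for each point `P` of `AG(2,3)`, and
(b) `{(P,x), (Q,y), (R,z)}` for each line `{P,Q,R}` of `AG(2,3)` and
`x, y, z ∈ GF(2)` with `x + y + z = f {P,Q,R}`. -/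
def STrip19 (f : Finset AGPt → ZMod 2) : Set (Finset SPt19) :=
  {t | (∃ P : AGPt, t = {none, some (P, 0), some (P, 1)}) ∨
       (∃ (P Q R : AGPt) (x y z : ZMod 2), P ≠ Q ∧ P ≠ R ∧ Q ≠ R ∧ P + Q + R = 0 ∧
          x + y + z = f ({P, Q, R} : Finset AGPt) ∧
          t = {some (P, x), some (Q, y), some (R, z)})}

/-- The line `{(0,0),(0,1),(0,2)}` of `AG(2,3)`. -/
def agLine1 : Finset AGPt := {(0, 0), (0, 1), (0, 2)}

/-- The line `{(0,0),(1,0),(2,0)}` of `AG(2,3)`. -/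
def agLine2 : Finset AGPt := {(0, 0), (1, 0), (2, 0)}

/-- The function on lines which is identically `0`. -/
def agf0 : Finset AGPt → ZMod 2 := fun _ => 0

/-- The function on lines taking the value `1` exactly on `{(0,0),(0,1),(0,2)}`. -/
def agf1 : Finset AGPt → ZMod 2 := fun L => if L = agLine1 then 1 else 0

/-- The function on lines taking the value `1` exactly on the two lines
`{(0,0),(0,1),(0,2)}` and `{(0,0),(1,0),(2,0)}`. -/
def agf2 : Finset AGPt → ZMod 2 := fun L => if L = agLine1 ∨ L = agLine2 then 1 else 0

/-- A triple containing points over distinct `P` and `Q` is determined by these two points. -/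
lemma STrip19.eq_of_mem {f : Finset AGPt → ZMod 2} {t : Finset SPt19} (ht : t ∈ STrip19 f)
    {P Q : AGPt} {x y : ZMod 2} (hP : some (P, x) ∈ t) (hQ : some (Q, y) ∈ t) (hPQ : P ≠ Q) :
    t = {some (P, x), some (Q, y), some (-P - Q, f {P, Q, -P - Q} - x - y)} := by
  rcases ht with ⟨A, rfl⟩ | ⟨A, B, C, u, v, w, -, -, -, hs, hf, rfl⟩
  · simp at hP hQ
    grind
  · have hC : C = -A - B := by linear_combination hs
    have hw : w = f {A, B, C} - u - v := by linear_combination hf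
    have hA : A = -B - C := by linear_combination hs
    have hB : B = -A - C := by linear_combination hs
    have hu : u = f {A, B, C} - v - w := by linear_combination hf
    have hv : v = f {A, B, C} - u - w := by linear_combination hf
    have hA' : A = -C - B := by linear_combination hs
    have hB' : B = -C - A := by linear_combination hs
    have hC' : C = -B - A := by linear_combination hs
    have e1 : ({A, C, B} : Finset AGPt) = {A, B, C} := by grind
    have e2 : ({B, A, C} : Finset AGPt) = {A, B, C} := by grind
    have e3 : ({B, C, A} : Finset AGPt) = {A, B, C} := by grind
    have e4 : ({C, A, B} : Finset AGPt) = {A, B, C} := by grind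
    have e5 : ({C, B, A} : Finset AGPt) = {A, B, C} := by grind
    simp only [Finset.mem_insert, Finset.mem_singleton, Option.some.injEq, Prod.mk.injEq] at hP hQ
    rcases hP with ⟨rfl, rfl⟩ | ⟨rfl, rfl⟩ | ⟨rfl, rfl⟩ <;>
      rcases hQ with ⟨rfl, rfl⟩ | ⟨rfl, rfl⟩ | ⟨rfl, rfl⟩
    · exact absurd rfl hPQ
    · rw [← hC, ← hw]
    · rw [← hB, e1, ← hv]; grind
    · rw [← hC', e2, sub_right_comm, ← hw]; grind
    · exact absurd rfl hPQ
    · rw [← hA, e3, ← hu]; grind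
    · rw [← hB', e4, sub_right_comm, ← hv]; grind
    · rw [← hA', e5, sub_right_comm, ← hu]; grind
    · exact absurd rfl hPQ

/-- The triple through the two points over `P`. -/
lemma STrip19.eq_of_mem_fibre {f : Finset AGPt → ZMod 2} {t : Finset SPt19} (ht : t ∈ STrip19 f)
    {P : AGPt} {x y : ZMod 2} (hx : some (P, x) ∈ t) (hy : some (P, y) ∈ t) (hxy : x ≠ y) :
    t = {none, some (P, 0), some (P, 1)} := by
  rcases ht with ⟨A, rfl⟩ | ⟨A, B, C, u, v, w, h1, h2, h3, hs, hf, rfl⟩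
  · simp at hx hy
    grind
  · simp at hx hy
    grind

lemma STrip19.eq_of_none_mem {f : Finset AGPt → ZMod 2} {t : Finset SPt19} (ht : t ∈ STrip19 f)
    (h : none ∈ t) : ∃ P, t = {none, some (P, 0), some (P, 1)} := by
  rcases ht with h | ⟨A, B, C, u, v, w, h1, h2, h3, hs, hf, rfl⟩
  · exact h
  · simp at h

lemma STrip19.card_eq {f : Finset AGPt → ZMod 2} {t : Finset SPt19} (ht : t ∈ STrip19 f) :
    t.card = 3 := by
  rcases ht with ⟨A, rfl⟩ | ⟨A, B, C, u, v, w, h1, h2, h3, hs, hf, rfl⟩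
  · rw [Finset.card_eq_three]
    exact ⟨_, _, _, by simp, by simp, by simp, rfl⟩
  · rw [Finset.card_eq_three]
    exact ⟨_, _, _, by simp [h1], by simp [h2], by simp [h3], rfl⟩

lemma STrip19.ne {f : Finset AGPt → ZMod 2} {a b c : SPt19}
    (h : ({a, b, c} : Finset SPt19) ∈ STrip19 f) : a ≠ b ∧ a ≠ c ∧ b ≠ c := by
  have h3 := STrip19.card_eq h
  refine ⟨?_, ?_, ?_⟩ <;> rintro rfl
  · have := Finset.card_le_two (a := a) (b := c)
    simp at h3; omega
  · have := Finset.card_le_two (a := b) (b := a)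
    have e : ({a, b, a} : Finset SPt19) = {b, a} := by grind
    rw [e] at h3; omega
  · have := Finset.card_le_two (a := a) (b := b)
    simp at h3; omega

/-- `-P-Q` is the third point of the line through distinct `P` and `Q`: in characteristic `3`,
`P = -P-Q` would force `P = Q`. -/
lemma ne_third {P Q : AGPt} (h : P ≠ Q) : P ≠ -P - Q ∧ Q ≠ -P - Q := by
  revert P Q; decide

lemma STrip19.mem_of_ne (f : Finset AGPt → ZMod 2) {P Q : AGPt} (x y : ZMod 2) (h : P ≠ Q) :
    ({some (P, x), some (Q, y), some (-P - Q, f {P, Q, -P - Q} - x - y)} : Finset SPt19)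
      ∈ STrip19 f :=
  Or.inr ⟨P, Q, -P - Q, x, y, _, h, (ne_third h).1, (ne_third h).2, by ring, by ring, rfl⟩

lemma STrip19.isSTS (f : Finset AGPt → ZMod 2) : IsSTS (STrip19 f) := by
  refine ⟨fun t ht => STrip19.card_eq ht, ?_⟩
  have two : ∀ x : ZMod 2, x = 0 ∨ x = 1 := by decide
  -- a triple containing `(*,1)` and a point over `P` is the one of type (a) at `P`
  have key : ∀ (P : AGPt) (x : ZMod 2) (t : Finset SPt19), t ∈ STrip19 f → none ∈ t →
      some (P, x) ∈ t → t = {none, some (P, 0), some (P, 1)} := by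
    intro P x t ht hn hp
    obtain ⟨A, rfl⟩ := STrip19.eq_of_none_mem ht hn
    simp at hp
    grind
  rintro (_ | ⟨P, x⟩) (_ | ⟨Q, y⟩) hab
  · exact absurd rfl hab
  · refine ⟨_, ⟨Or.inl ⟨Q, rfl⟩, by simp, ?_⟩, fun t ht => key Q y t ht.1 ht.2.1 ht.2.2⟩
    rcases two y with rfl | rfl <;> simp
  · refine ⟨_, ⟨Or.inl ⟨P, rfl⟩, ?_, by simp⟩, fun t ht => key P x t ht.1 ht.2.2 ht.2.1⟩
    rcases two x with rfl | rfl <;> simp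
  · by_cases hPQ : P = Q
    · subst hPQ
      have hxy : x ≠ y := by rintro rfl; exact hab rfl
      refine ⟨_, ⟨Or.inl ⟨P, rfl⟩, ?_, ?_⟩,
        fun t ht => STrip19.eq_of_mem_fibre ht.1 ht.2.1 ht.2.2 hxy⟩
      · rcases two x with rfl | rfl <;> simp
      · rcases two y with rfl | rfl <;> simp
    · exact ⟨_, ⟨STrip19.mem_of_ne f x y hPQ, by simp, by simp⟩,
        fun t ht => STrip19.eq_of_mem ht.1 ht.2.1 ht.2.2 hPQ⟩

lemma STrip19.fibre_of_none {f : Finset AGPt → ZMod 2} {a b : SPt19}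
    (h : ({none, a, b} : Finset SPt19) ∈ STrip19 f) :
    ∃ P x, a = some (P, x) ∧ b = some (P, x + 1) := by
  obtain ⟨h1, h2, h3⟩ := STrip19.ne h
  obtain ⟨P, hP⟩ := STrip19.eq_of_none_mem h (by simp)
  have ha : a ∈ ({none, some (P, 0), some (P, 1)} : Finset SPt19) := by rw [← hP]; simp
  have hb : b ∈ ({none, some (P, 0), some (P, 1)} : Finset SPt19) := by rw [← hP]; simp
  simp only [Finset.mem_insert, Finset.mem_singleton] at ha hb
  rcases ha with rfl | rfl | rfl
  · exact absurd rfl h1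
  · rcases hb with rfl | rfl | rfl
    · exact absurd rfl h2
    · exact absurd rfl h3
    · exact ⟨P, 0, rfl, rfl⟩
  · rcases hb with rfl | rfl | rfl
    · exact absurd rfl h2
    · exact ⟨P, 1, rfl, rfl⟩
    · exact absurd rfl h3

lemma triple_rotate (a b c : SPt19) : ({a, b, c} : Finset SPt19) = {c, a, b} := by
  grind

lemma STrip19.isVeblen_none (f : Finset AGPt → ZMod 2) :
    IsVeblen (STrip19 f) (none : SPt19) := by
  intro a b c d t hab hcd ht
  obtain ⟨P, x, rfl, rfl⟩ := STrip19.fibre_of_none hab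
  obtain ⟨Q, y, rfl, rfl⟩ := STrip19.fibre_of_none hcd
  obtain ⟨h1, h2, h3⟩ := STrip19.ne ht
  by_cases hPQ : P = Q
  · subst hPQ
    -- here `b = c` and `d = a`, so the required triple is the given one
    have hxy : ∀ x y : ZMod 2, x ≠ y → y = x + 1 ∧ x = y + 1 := by decide
    obtain ⟨e1, e2⟩ := hxy x y (by rintro rfl; exact h3 rfl)
    rw [← e1, ← e2, Finset.pair_comm]
    exact ht
  · have e := STrip19.eq_of_mem ht (P := P) (Q := Q) (x := x) (y := y) (by simp) (by simp) hPQ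
    have hmem : t ∈ ({some (P, x), some (Q, y),
        some (-P - Q, f {P, Q, -P - Q} - x - y)} : Finset SPt19) := by rw [← e]; simp
    simp only [Finset.mem_insert, Finset.mem_singleton] at hmem
    rcases hmem with rfl | rfl | rfl
    · exact absurd rfl h1
    · exact absurd rfl h2
    · have hm := STrip19.mem_of_ne f (x + 1) (y + 1) hPQ
      have two : (2 : ZMod 2) = 0 := rfl
      have hz : f {P, Q, -P - Q} - (x + 1) - (y + 1) = f {P, Q, -P - Q} - x - y := by
        linear_combination -two
      rw [hz] at hm
      rwa [triple_rotate] at hm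

lemma STrip19.not_isVeblen_some (f : Finset AGPt → ZMod 2) (P : AGPt) (x : ZMod 2) :
    ¬ IsVeblen (STrip19 f) (some (P, x) : SPt19) := by
  intro h
  have hA : P ≠ P + (1, 0) := by clear h; revert P; decide
  have hC : P ≠ P + (0, 1) := by clear h hA; revert P; decide
  have hAC : P + (1, 0) ≠ P + (0, 1) := by simp
  have m1 := STrip19.mem_of_ne f x 0 hA
  have m2 := STrip19.mem_of_ne f x 0 hC
  have m3 := STrip19.mem_of_ne f 0 0 hAC
  rw [triple_rotate] at m3
  have m4 := h _ _ _ _ _ m1 m2 m3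
  have hBD : -P - (P + (1, 0)) ≠ -P - (P + (0, 1)) := by simp
  have m5 := STrip19.eq_of_mem m4 (Finset.mem_insert_of_mem (Finset.mem_insert_self _ _))
    (Finset.mem_insert_of_mem (Finset.mem_insert_of_mem (Finset.mem_singleton_self _))) hBD
  have hT := (Finset.ext_iff.mp m5 _).mp (Finset.mem_insert_self _ _)
  simp only [Finset.mem_insert, Finset.mem_singleton, Option.some.injEq, Prod.mk.injEq] at hT
  have no : ∀ P : AGPt, -(P + (1, 0)) - (P + (0, 1)) ≠ -P - (P + (1, 0)) ∧
      -(P + (1, 0)) - (P + (0, 1)) ≠ -P - (P + (0, 1)) ∧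
      -(P + (1, 0)) - (P + (0, 1)) ≠ -(-P - (P + (1, 0))) - (-P - (P + (0, 1))) := by decide
  obtain ⟨n1, n2, n3⟩ := no P
  rcases hT with hT | hT | hT
  · exact n1 hT.1
  · exact n2 hT.1
  · exact n3 hT.1

/-- For the function `f1` taking the value `1` exactly on the line
`{(0,0),(0,1),(0,2)}` of `AG(2,3)`, the structure `S(f1)` is a Steiner triple
system of order 19 whose unique Veblen point is `(*,1)`. -/
theorem sts19_from_f1 :
    Fintype.card SPt19 = 19 ∧ IsSTS (STrip19 agf1) ∧
    IsVeblen (STrip19 agf1) (none : SPt19) ∧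
    ∀ y : SPt19, IsVeblen (STrip19 agf1) y → y = none := by
  refine ⟨by simp [ZMod.card], STrip19.isSTS _, STrip19.isVeblen_none _, ?_⟩
  rintro (_ | ⟨P, x⟩) h
  · rfl
  · exact absurd h (STrip19.not_isVeblen_some _ P x)
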